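/- arXiv:1304.3956 — 2 statements merged into one kernel-verified Lean document; each statement's English description precedes it below -/
import Mathlib

section
/- For each n ∈ ℕ let P_n(X) = ∑_{0 ≤ k ≤ ⌊n/2⌋} ((2n−k)! / ((n−2k)!·k!)) X^k ∈ ℂ[X]. Then for every n ∈ ℕ, the polynomials P_n(X) and P_{n+1}(X) have no common zero in ℂ. -/
open Polynomial

/-- `P n = ∑_{0 ≤ k ≤ ⌊n/2⌋} ((2n−k)! / ((n−2k)!·k!)) Xᵏ ∈ ℂ[X]`. -/
noncomputable def P (n : ℕ) : Polynomial ℂ :=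
  ∑ k ∈ Finset.range (n / 2 + 1),
    C (((2 * n - k).factorial : ℂ) /
        (((n - 2 * k).factorial : ℂ) * (k.factorial : ℂ))) * X ^ k


lemma P_coeff_zero {n k : ℕ} (h : n < 2 * k) : (P n).coeff k = 0 := by
  simp only [P, finsetSum_coeff, coeff_C_mul, coeff_X_pow]
  apply Finset.sum_eq_zero
  intro i hi
  have := Finset.mem_range.1 hi
  rw [if_neg (by omega), mul_zero]

lemma P_coeff {n k a b : ℕ} (h : n = 2 * k + a) (hb : b = 3 * k + 2 * a) :
    (P n).coeff k = (b.factorial : ℂ) / ((a.factorial : ℂ) * (k.factorial : ℂ)) := by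
  simp only [P, finsetSum_coeff, coeff_C_mul, coeff_X_pow]
  rw [Finset.sum_eq_single k]
  · rw [if_pos rfl, mul_one, show 2 * n - k = b by omega, show n - 2 * k = a by omega]
  · intro i _ hi
    rw [if_neg (Ne.symm hi), mul_zero]
  · intro hk
    exact absurd (Finset.mem_range.2 (by omega)) hk

lemma rec0 (n : ℕ) : (P (n+2)).coeff 0 = 2 * (2 * n + 3) * (P (n+1)).coeff 0 := by
  rw [P_coeff (a := n+2) (b := 2*n+1+1+1+1) (by omega) (by omega),
    P_coeff (a := n+1) (b := 2*n+1+1) (by omega) (by omega)]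
  have h1 : ((n.factorial : ℕ) : ℂ) ≠ 0 := by exact_mod_cast n.factorial_ne_zero
  have h2 : (n : ℂ) + 1 ≠ 0 := by exact_mod_cast n.succ_ne_zero
  have h3 : (n : ℂ) + 1 + 1 ≠ 0 := by exact_mod_cast (n+1).succ_ne_zero
  simp only [Nat.factorial_succ, Nat.factorial_zero]
  push_cast
  field_simp
  ring

lemma rec1 (n : ℕ) : (P (n+2)).coeff 1 + 4 * (P (n+2)).coeff 0 =
    (2 * n + 3) * (2 * (P (n+1)).coeff 1 + 9 * (P (n+1)).coeff 0) := by
  rcases n with _ | n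
  · rw [P_coeff_zero (n := 0+1) (k := 1) (by omega),
      P_coeff (n := 0+2) (k := 1) (a := 0) (b := 3) (by omega) (by omega),
      P_coeff (n := 0+2) (k := 0) (a := 2) (b := 4) (by omega) (by omega),
      P_coeff (n := 0+1) (k := 0) (a := 1) (b := 2) (by omega) (by omega)]
    norm_num [Nat.factorial]
  · rw [P_coeff (n := n+1+2) (k := 1) (a := n+1) (b := 2*n+1+1+1+1+1) (by omega) (by omega),
      P_coeff (n := n+1+2) (k := 0) (a := n+1+1+1) (b := 2*n+1+1+1+1+1+1) (by omega) (by omega),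
      P_coeff (n := n+1+1) (k := 1) (a := n) (b := 2*n+1+1+1) (by omega) (by omega),
      P_coeff (n := n+1+1) (k := 0) (a := n+1+1) (b := 2*n+1+1+1+1) (by omega) (by omega)]
    have h1 : ((n.factorial : ℕ) : ℂ) ≠ 0 := by exact_mod_cast n.factorial_ne_zero
    have h2 : (n : ℂ) + 1 ≠ 0 := by exact_mod_cast n.succ_ne_zero
    have h3 : (n : ℂ) + 1 + 1 ≠ 0 := by exact_mod_cast (n+1).succ_ne_zero
    have h4 : (n : ℂ) + 1 + 1 + 1 ≠ 0 := by exact_mod_cast (n+1+1).succ_ne_zero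
    have h5 : (n : ℂ) + 3 ≠ 0 := by exact_mod_cast (n+2).succ_ne_zero
    have h6 : (n : ℂ) + 1 + 2 ≠ 0 := by exact_mod_cast (n+2).succ_ne_zero
    have h7 : (n : ℂ) + 2 + 1 ≠ 0 := by exact_mod_cast (n+2).succ_ne_zero
    have h8 : (n : ℂ) + 2 ≠ 0 := by exact_mod_cast (n+1).succ_ne_zero
    simp only [Nat.factorial_succ, Nat.factorial_zero, Nat.factorial_one]
    push_cast
    field_simp
    ring

lemma rec2 (n j : ℕ) : (P (n+2)).coeff (j+2) + 4 * (P (n+2)).coeff (j+1) =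
    (2 * n + 3) * (2 * (P (n+1)).coeff (j+2) + 9 * (P (n+1)).coeff (j+1))
    + 3 * (9 * (n+1)^2 - 1) * (P n).coeff j := by
  have g1 : ((j.factorial : ℕ) : ℂ) ≠ 0 := by exact_mod_cast j.factorial_ne_zero
  have g2 : (j : ℂ) + 1 ≠ 0 := by exact_mod_cast j.succ_ne_zero
  have g3 : (j : ℂ) + 1 + 1 ≠ 0 := by exact_mod_cast (j+1).succ_ne_zero
  by_cases h : n < 2 * j
  · rw [P_coeff_zero (by omega), P_coeff_zero (by omega), P_coeff_zero (by omega),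
      P_coeff_zero (by omega), P_coeff_zero (by omega)]
    ring
  obtain ⟨m, rfl⟩ := Nat.exists_eq_add_of_le (not_lt.1 h)
  rw [P_coeff (n := 2*j+m) (k := j) (a := m) (b := 3*j+2*m) (by omega) (by omega),
    P_coeff (n := 2*j+m+2) (k := j+1) (a := m) (b := 3*j+2*m+1+1+1) (by omega) (by omega)]
  rcases m with _ | _ | _ | m
  · rw [P_coeff_zero (by omega), P_coeff_zero (by omega), P_coeff_zero (by omega)]
    simp only [Nat.factorial_succ, Nat.factorial_zero]
    push_cast
    field_simp
    ring
  · rw [P_coeff_zero (n := 2*j+(0+1)+2) (by omega),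
      P_coeff_zero (n := 2*j+(0+1)+1) (k := j+2) (by omega),
      P_coeff (n := 2*j+(0+1)+1) (k := j+1) (a := 0) (b := 3*j+2*(0+1)+1) (by omega) (by omega)]
    simp only [Nat.factorial_succ, Nat.factorial_zero]
    push_cast
    field_simp
    ring
  · rw [P_coeff (n := 2*j+(0+1+1)+2) (k := j+2) (a := 0) (b := 3*j+2*(0+1+1)+1+1)
        (by omega) (by omega),
      P_coeff_zero (n := 2*j+(0+1+1)+1) (k := j+2) (by omega),
      P_coeff (n := 2*j+(0+1+1)+1) (k := j+1) (a := 1) (b := 3*j+2*(0+1+1)+1) (by omega) (by omega)]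
    simp only [Nat.factorial_succ, Nat.factorial_zero, Nat.factorial_one]
    push_cast
    field_simp
    ring
  · rw [P_coeff (n := 2*j+(m+1+1+1)+2) (k := j+2) (a := m+1) (b := 3*j+2*(m+1+1+1)+1+1)
        (by omega) (by omega),
      P_coeff (n := 2*j+(m+1+1+1)+1) (k := j+2) (a := m) (b := 3*j+2*(m+1+1+1))
        (by omega) (by omega),
      P_coeff (n := 2*j+(m+1+1+1)+1) (k := j+1) (a := m+1+1) (b := 3*j+2*(m+1+1+1)+1)
        (by omega) (by omega)]
    have h1 : ((m.factorial : ℕ) : ℂ) ≠ 0 := by exact_mod_cast m.factorial_ne_zero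
    have h2 : (m : ℂ) + 1 ≠ 0 := by exact_mod_cast m.succ_ne_zero
    have h3 : (m : ℂ) + 1 + 1 ≠ 0 := by exact_mod_cast (m+1).succ_ne_zero
    have h4 : (m : ℂ) + 1 + 1 + 1 ≠ 0 := by exact_mod_cast (m+1+1).succ_ne_zero
    have h5 : (m : ℂ) + 3 ≠ 0 := by exact_mod_cast (m+2).succ_ne_zero
    have h6 : (m : ℂ) + 1 + 2 ≠ 0 := by exact_mod_cast (m+2).succ_ne_zero
    have h7 : (m : ℂ) + 2 + 1 ≠ 0 := by exact_mod_cast (m+2).succ_ne_zero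
    have h8 : (m : ℂ) + 2 ≠ 0 := by exact_mod_cast (m+1).succ_ne_zero
    generalize hF : 3*j+2*(m+1+1+1) = b
    have hb : (b : ℂ) = 3*j+2*(m+1+1+1) := by rw [← hF]; push_cast; ring
    simp only [Nat.factorial_succ]
    push_cast
    rw [hb]
    field_simp
    ring

lemma P_rec (n : ℕ) : P (n+2) + C 4 * (P (n+2) * X) =
    C (2 * (n:ℂ) + 3) * (C 2 * P (n+1) + C 9 * (P (n+1) * X))
    + C (3 * (9 * ((n:ℂ)+1)^2 - 1)) * (P n * X * X) := by
  ext k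
  rcases k with _ | _ | j
  · have := rec0 n
    simp only [coeff_add, coeff_C_mul, coeff_mul_X_zero]
    rw [this]; ring
  · have := rec1 n
    simp only [coeff_add, coeff_C_mul, coeff_mul_X, coeff_mul_X_zero]
    simp only [zero_add]
    rw [this]; ring
  · have := rec2 n j
    simp only [coeff_add, coeff_C_mul, coeff_mul_X]
    exact this

theorem stmt_14 (n : ℕ) : ¬ ∃ x : ℂ, (P n).eval x = 0 ∧ (P (n + 1)).eval x = 0 := by
  rintro ⟨x, h0, h1⟩
  induction n with
  | zero =>
    simp [P] at h0
  | succ n ih =>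
    have hx : x ≠ 0 := by
      rintro rfl
      rw [← coeff_zero_eq_eval_zero, P_coeff (a := n+1) (b := 2*(n+1)) (by omega) (by omega)] at h0
      have a1 : (((2*(n+1)).factorial : ℕ) : ℂ) ≠ 0 := by exact_mod_cast Nat.factorial_ne_zero _
      have a2 : (((n+1).factorial : ℕ) : ℂ) ≠ 0 := by exact_mod_cast Nat.factorial_ne_zero _
      simp [a1, a2] at h0
    apply ih _ h0
    have h := congrArg (eval x) (P_rec n)
    simp only [eval_add, eval_mul, eval_C, eval_X] at h
    rw [h0, h1] at h
    have hc : (3 * (9 * ((n:ℂ)+1)^2 - 1)) ≠ 0 := by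
      have : (3 * (9 * ((n:ℂ)+1)^2 - 1)) = ((27*n^2+54*n+24 : ℕ) : ℂ) := by push_cast; ring
      rw [this]
      exact Nat.cast_ne_zero.2 (by positivity)
    simpa [hc, hx] using h
end

section
/- Let a = (a₁,a₂) and b = (b₁,b₂) be two distinct vectors in ℕ² and for n ∈ ℕ let P_{a,b,n}(X) = ∑_{k=0}^{n} ((a₁k + b₁(n−k))! · (a₂k + b₂(n−k))! / (k!·(n−k)!)) X^k ∈ ℂ[X]. Then for every n ≥ 1 the following are equivalent: (i) every polynomial f = μ₁X₁^{a₁}X₂^{a₂} + μ₂X₁^{b₁}X₂^{b₂} with μ₁, μ₂ ∈ ℂ satisfies: f = 0 or there exists k with n ≤ k ≤ n + N(f) − 1 such that 𝓛(f^k) ≠ 0; (ii) the polynomials P_{a,b,n}(X) and P_{a,b,n+1}(X) have no common zero in ℂ. -/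
open MvPolynomial Polynomial

/-- The factorial map `𝓛 : ℂ[X₁,…,X_m] → ℂ`, defined on monomials by
`𝓛(X₁^{l₁}⋯X_m^{l_m}) = l₁!⋯l_m!`. -/
noncomputable def factMap (m : ℕ) (f : MvPolynomial (Fin m) ℂ) : ℂ :=
  ∑ d ∈ f.support, f.coeff d * ∏ i, ((d i).factorial : ℂ)

/-- `P_{a,b,n}(X) = ∑_{k=0}^{n} ((a₁k + b₁(n−k))!·(a₂k + b₂(n−k))!/(k!(n−k)!)) Xᵏ`. -/
noncomputable def Pab (a b : ℕ × ℕ) (n : ℕ) : Polynomial ℂ :=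
  ∑ k ∈ Finset.range (n + 1),
    Polynomial.C (((a.1 * k + b.1 * (n - k)).factorial : ℂ) *
        ((a.2 * k + b.2 * (n - k)).factorial : ℂ) /
       ((k.factorial : ℂ) * ((n - k).factorial : ℂ))) * Polynomial.X ^ k

theorem factMap_eq {m : ℕ} (f : MvPolynomial (Fin m) ℂ) (s : Finset (Fin m →₀ ℕ))
    (h : f.support ⊆ s) :
    factMap m f = ∑ d ∈ s, f.coeff d * ∏ i, ((d i).factorial : ℂ) := by
  unfold factMap
  refine Finset.sum_subset h ?_
  intro d _ hd
  rw [MvPolynomial.notMem_support_iff.mp hd, zero_mul]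

theorem factMap_add {m : ℕ} (f g : MvPolynomial (Fin m) ℂ) :
    factMap m (f + g) = factMap m f + factMap m g := by
  classical
  rw [factMap_eq (f + g) (f.support ∪ g.support) MvPolynomial.support_add,
    factMap_eq f (f.support ∪ g.support) Finset.subset_union_left,
    factMap_eq g (f.support ∪ g.support) Finset.subset_union_right, ← Finset.sum_add_distrib]
  refine Finset.sum_congr rfl fun d _ => ?_
  rw [MvPolynomial.coeff_add, add_mul]

theorem factMap_sum {m : ℕ} {ι : Type} (s : Finset ι) (f : ι → MvPolynomial (Fin m) ℂ) :
    factMap m (∑ i ∈ s, f i) = ∑ i ∈ s, factMap m (f i) := by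
  classical
  induction s using Finset.induction_on with
  | empty => simp [factMap]
  | insert i s hi ih => rw [Finset.sum_insert hi, Finset.sum_insert hi, factMap_add, ih]

theorem factMap_monomial {m : ℕ} (d : Fin m →₀ ℕ) (c : ℂ) :
    factMap m (MvPolynomial.monomial d c) = c * ∏ i, ((d i).factorial : ℂ) := by
  classical
  rw [factMap_eq _ {d} MvPolynomial.support_monomial_subset]
  simp

/-- exponent vector -/
noncomputable def ev (a : ℕ × ℕ) : Fin 2 →₀ ℕ := Finsupp.single 0 a.1 + Finsupp.single 1 a.2

theorem ev_zero (a : ℕ × ℕ) : ev a 0 = a.1 := by simp [ev]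
theorem ev_one (a : ℕ × ℕ) : ev a 1 = a.2 := by simp [ev]

theorem mon_eq (a : ℕ × ℕ) (μ : ℂ) :
    (MvPolynomial.C μ * MvPolynomial.X 0 ^ a.1 * MvPolynomial.X 1 ^ a.2 :
      MvPolynomial (Fin 2) ℂ) = MvPolynomial.monomial (ev a) μ := by
  rw [MvPolynomial.X_pow_eq_monomial, MvPolynomial.X_pow_eq_monomial, MvPolynomial.C_mul_monomial,
    MvPolynomial.monomial_mul]
  simp [ev]

theorem L_pow (a b : ℕ × ℕ) (μ₁ μ₂ : ℂ) (k : ℕ) :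
    factMap 2 ((MvPolynomial.monomial (ev a) μ₁ + MvPolynomial.monomial (ev b) μ₂) ^ k) =
      ∑ j ∈ Finset.range (k + 1), μ₁ ^ j * μ₂ ^ (k - j) * (k.choose j : ℂ) *
        (((a.1 * j + b.1 * (k - j)).factorial : ℂ) *
        ((a.2 * j + b.2 * (k - j)).factorial : ℂ)) := by
  rw [add_pow, factMap_sum]
  refine Finset.sum_congr rfl fun j _ => ?_
  rw [MvPolynomial.monomial_pow, MvPolynomial.monomial_pow, MvPolynomial.monomial_mul,
    ← map_natCast (MvPolynomial.C (σ := Fin 2) (R := ℂ)), mul_comm _ (MvPolynomial.C _),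
    MvPolynomial.C_mul_monomial, factMap_monomial, Fin.prod_univ_two]
  simp only [Finsupp.add_apply, Finsupp.smul_apply, ev_zero, ev_one, smul_eq_mul]
  rw [mul_comm j, mul_comm j, mul_comm (k - j), mul_comm (k - j)]
  ring

theorem L_pow_P (a b : ℕ × ℕ) (μ₁ μ₂ : ℂ) (h : μ₂ ≠ 0) (k : ℕ) :
    factMap 2 ((MvPolynomial.monomial (ev a) μ₁ + MvPolynomial.monomial (ev b) μ₂) ^ k) =
      (k.factorial : ℂ) * μ₂ ^ k * (Pab a b k).eval (μ₁ / μ₂) := by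
  rw [L_pow, Pab, Polynomial.eval_finsetSum, Finset.mul_sum]
  refine Finset.sum_congr rfl fun j hj => ?_
  have hjk : j ≤ k := by simpa [Nat.lt_succ_iff] using hj
  rw [Nat.cast_choose ℂ hjk]
  simp only [Polynomial.eval_mul, Polynomial.eval_C, Polynomial.eval_pow, Polynomial.eval_X]
  have h1 : (j.factorial : ℂ) ≠ 0 := by exact_mod_cast j.factorial_ne_zero
  have h2 : ((k - j).factorial : ℂ) ≠ 0 := by exact_mod_cast (k - j).factorial_ne_zero
  have h3 : μ₂ ^ k = μ₂ ^ (k - j) * μ₂ ^ j := by rw [← pow_add, Nat.sub_add_cancel hjk]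
  rw [h3, div_pow]
  field_simp

theorem L_mon_ne (a : ℕ × ℕ) (μ : ℂ) (h : μ ≠ 0) (k : ℕ) :
    factMap 2 ((MvPolynomial.monomial (ev a) μ) ^ k) ≠ 0 := by
  rw [MvPolynomial.monomial_pow, factMap_monomial]
  refine mul_ne_zero (pow_ne_zero _ h) (Finset.prod_ne_zero_iff.mpr fun i _ => ?_)
  exact_mod_cast Nat.factorial_ne_zero _

theorem ev_inj {a b : ℕ × ℕ} (h : ev a = ev b) : a = b := by
  have h0 := DFunLike.congr_fun h 0
  have h1 := DFunLike.congr_fun h 1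
  rw [ev_zero, ev_zero] at h0
  rw [ev_one, ev_one] at h1
  exact Prod.ext h0 h1

theorem stmt_16 (a b : ℕ × ℕ) (hab : a ≠ b) (n : ℕ) (hn : 1 ≤ n) :
    (∀ μ₁ μ₂ : ℂ,
        (MvPolynomial.C μ₁ * MvPolynomial.X 0 ^ a.1 * MvPolynomial.X 1 ^ a.2 +
          MvPolynomial.C μ₂ * MvPolynomial.X 0 ^ b.1 * MvPolynomial.X 1 ^ b.2 :
            MvPolynomial (Fin 2) ℂ) = 0 ∨
        ∃ k : ℕ, n ≤ k ∧
          k ≤ n + (MvPolynomial.C μ₁ * MvPolynomial.X 0 ^ a.1 * MvPolynomial.X 1 ^ a.2 +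
              MvPolynomial.C μ₂ * MvPolynomial.X 0 ^ b.1 * MvPolynomial.X 1 ^ b.2 :
                MvPolynomial (Fin 2) ℂ).support.card - 1 ∧
          factMap 2 ((MvPolynomial.C μ₁ * MvPolynomial.X 0 ^ a.1 * MvPolynomial.X 1 ^ a.2 +
              MvPolynomial.C μ₂ * MvPolynomial.X 0 ^ b.1 * MvPolynomial.X 1 ^ b.2) ^ k) ≠ 0)
    ↔ ¬ ∃ x : ℂ, (Pab a b n).eval x = 0 ∧ (Pab a b (n + 1)).eval x = 0 := by
  classical
  simp only [mon_eq]
  have hne : ev a ≠ ev b := fun h => hab (ev_inj h)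
  constructor
  · rintro h ⟨x, hx0, hx1⟩
    rcases h x 1 with h | ⟨k, hk1, hk2, hk3⟩
    · have := congrArg (MvPolynomial.coeff (ev b)) h
      simp [MvPolynomial.coeff_monomial, hne] at this
    · have hc : (MvPolynomial.monomial (ev a) x +
          MvPolynomial.monomial (ev b) (1 : ℂ)).support.card ≤ 2 := by
        refine (Finset.card_le_card (MvPolynomial.support_add.trans
          (Finset.union_subset_union MvPolynomial.support_monomial_subset
            MvPolynomial.support_monomial_subset))).trans ?_
        exact (Finset.card_union_le _ _).trans (by simp)
      apply hk3
      rw [L_pow_P a b x 1 one_ne_zero, div_one]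
      have hk : k = n ∨ k = n + 1 := by omega
      rcases hk with rfl | rfl
      · rw [hx0, mul_zero]
      · rw [hx1, mul_zero]
  · intro h μ₁ μ₂
    by_cases hf : (MvPolynomial.monomial (ev a) μ₁ + MvPolynomial.monomial (ev b) μ₂ :
        MvPolynomial (Fin 2) ℂ) = 0
    · exact Or.inl hf
    right
    have hc : 1 ≤ (MvPolynomial.monomial (ev a) μ₁ + MvPolynomial.monomial (ev b) μ₂ :
        MvPolynomial (Fin 2) ℂ).support.card :=
      Finset.card_pos.mpr (Finset.nonempty_iff_ne_empty.mpr
        (fun h0 => hf (MvPolynomial.support_eq_empty.mp h0)))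
    by_cases h2 : μ₂ = 0
    · refine ⟨n, le_rfl, by omega, ?_⟩
      subst h2
      rw [map_zero, add_zero] at hf ⊢
      exact L_mon_ne a μ₁ (fun h0 => hf (by rw [h0, map_zero])) n
    by_cases h1 : μ₁ = 0
    · refine ⟨n, le_rfl, by omega, ?_⟩
      subst h1
      rw [map_zero, zero_add]
      exact L_mon_ne b μ₂ h2 n
    by_cases hp : (Pab a b n).eval (μ₁ / μ₂) = 0
    · have hp1 : (Pab a b (n + 1)).eval (μ₁ / μ₂) ≠ 0 := fun h' => h ⟨_, hp, h'⟩
      have hc2 : 2 ≤ (MvPolynomial.monomial (ev a) μ₁ + MvPolynomial.monomial (ev b) μ₂ :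
          MvPolynomial (Fin 2) ℂ).support.card := by
        refine (Finset.card_pair hne).symm.le.trans ?_
        apply Finset.card_le_card
        intro d hd
        rw [Finset.mem_insert, Finset.mem_singleton] at hd
        rw [MvPolynomial.mem_support_iff, MvPolynomial.coeff_add, MvPolynomial.coeff_monomial,
          MvPolynomial.coeff_monomial]
        rcases hd with rfl | rfl
        · simpa [hne.symm] using h1
        · simpa [hne] using h2
      refine ⟨n + 1, by omega, by omega, ?_⟩
      rw [L_pow_P a b μ₁ μ₂ h2]
      exact mul_ne_zero (mul_ne_zero (by exact_mod_cast Nat.factorial_ne_zero _)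
        (pow_ne_zero _ h2)) hp1
    · refine ⟨n, le_rfl, by omega, ?_⟩
      rw [L_pow_P a b μ₁ μ₂ h2]
      exact mul_ne_zero (mul_ne_zero (by exact_mod_cast Nat.factorial_ne_zero _)
        (pow_ne_zero _ h2)) hp
end
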